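/- arXiv:2401.06738 — 5 statements merged into one kernel-verified Lean document; each statement's English description precedes it below -/
import Mathlib

section
/- (One-step recurrence for SHB, Theorem B.1 / restated Theorem H.1 of Sebbouh et al.) Suppose (η_k)_{k≥0} is a non-increasing sequence with η_0 = η and 0 < η_k < 1/(2L) for all k. Define λ_k := ((1 − 2ηL)/(η_k μ))·(1 − (1 − η_k μ)^k), A_k := ‖w_k − w* + λ_k (w_k − w_{k−1})‖², E_k := A_k + 2 η_k λ_k (f(w_{k−1}) − f(w*)), and run SHB with α_k := η_k/(1 + λ_{k+1}) and β_k := λ_k (1 − η_k μ)/(1 + λ_{k+1}). Then for every k, E[E_{k+1}] ≤ (1 − η_k μ) E[E_k] + 2 L κ ζ² η_k² σ², where ζ = sqrt((n − b)/((n − 1) b)) and the expectation is over the random mini-batches. -/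
open scoped BigOperators RealInnerProductSpace
open Finset

noncomputable section

/-- Iterates of a stochastic process driven by one fresh random draw per iteration:
`procRun step s0 T bs` is the state after `T` steps, where the `k`-th step uses
the random draw `bs k`. -/
def procRun {S B : Type*} (step : ℕ → S → B → S) (s0 : S) :
    (T : ℕ) → (Fin T → B) → S
  | 0, _ => s0
  | T + 1, bs => step T (procRun step s0 T fun i => bs i.castSucc) (bs (Fin.last T))

/-- Expectation of a functional of the first `T` i.i.d. uniform draws from a finite type. -/
def expVal {B : Type*} [Fintype B] (T : ℕ) (g : (Fin T → B) → ℝ) : ℝ :=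
  (∑ bs : Fin T → B, g bs) / (Fintype.card B : ℝ) ^ T

abbrev Vec (d : ℕ) := EuclideanSpace ℝ (Fin d)

/-- Mini-batches: subsets of `{1, …, n}` of cardinality `b`. -/
abbrev Batch (n b : ℕ) := {s : Finset (Fin n) // s.card = b}

lemma expVal_succ {B : Type*} [Fintype B] (T : ℕ) (G : (Fin (T+1) → B) → ℝ) :
    expVal (T+1) G = expVal T (fun bs => (∑ c : B, G (Fin.snoc bs c)) / (Fintype.card B : ℝ)) := by
  unfold expVal
  rw [← Finset.sum_div, div_div, pow_succ', ]
  congr 1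
  rw [← (Fin.snocEquiv (fun _ : Fin (T+1) => B)).sum_comp, Fintype.sum_prod_type, Finset.sum_comm]
  rfl

lemma expVal_le {B : Type*} [Fintype B] [Nonempty B] (T : ℕ) (G H : (Fin T → B) → ℝ) (r c : ℝ)
    (h : ∀ bs, G bs ≤ r * H bs + c) : expVal T G ≤ r * expVal T H + c := by
  unfold expVal
  have hc : (0:ℝ) < (Fintype.card B : ℝ) ^ T := by
    have : 0 < Fintype.card B := Fintype.card_pos
    positivity
  rw [div_le_iff₀ hc]
  have h1 : ∑ bs, G bs ≤ ∑ bs, (r * H bs + c) := Finset.sum_le_sum fun i _ => h i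
  rw [Finset.sum_add_distrib, ← Finset.mul_sum] at h1
  simp only [Finset.sum_const, Finset.card_univ, Fintype.card_fun, Fintype.card_fin, nsmul_eq_mul,
    Nat.cast_pow] at h1
  calc _ ≤ _ := h1
    _ = _ := by field_simp

lemma batch_sum {n b : ℕ} {M : Type*} [AddCommMonoid M] (G : Finset (Fin n) → M) :
    ∑ S : Batch n b, G S.1 = ∑ S ∈ powersetCard b univ, G S := by
  rw [← Finset.sum_subtype (powersetCard b (univ : Finset (Fin n))) (fun x => by simp)]

lemma card_not_mem (n b : ℕ) (T : Finset (Fin n)) :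
    ∑ S ∈ powersetCard b (univ : Finset (Fin n)), (if Disjoint T S then (1:ℝ) else 0)
      = ((n - T.card).choose b : ℝ) := by
  rw [← Finset.sum_filter]
  have : (powersetCard b (univ : Finset (Fin n))).filter (fun S => Disjoint T S)
      = powersetCard b (univ \ T) := by
    ext S
    simp [Finset.subset_sdiff, and_comm, disjoint_comm]
  rw [this]
  simp [Finset.card_powersetCard, Finset.card_sdiff]

lemma choose1 (n b : ℕ) (hn : 1 ≤ n) (hbn : b ≤ n) :
    (n:ℝ) * ((n-1).choose b : ℝ) = ((n:ℝ) - b) * (n.choose b : ℝ) := by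
  obtain ⟨m, rfl⟩ : ∃ m, n = m + 1 := ⟨n - 1, by omega⟩
  have := Nat.choose_mul_succ_eq m b
  have h2 : ((m.choose b * (m+1) : ℕ) : ℝ) = (((m+1).choose b * (m+1-b) : ℕ) : ℝ) := by rw [this]
  rw [Nat.cast_mul, Nat.cast_mul, Nat.cast_sub hbn] at h2
  simp only [Nat.add_sub_cancel]
  linarith

lemma choose2 (n b : ℕ) (hn : 2 ≤ n) (hbn : b ≤ n) :
    (n:ℝ) * ((n:ℝ) - 1) * ((n-2).choose b : ℝ)
      = ((n:ℝ) - b) * ((n:ℝ) - 1 - b) * (n.choose b : ℝ) := by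
  have h1 := choose1 n b (by omega) hbn
  rcases Nat.lt_or_ge b n with h | h
  · have h2 := choose1 (n-1) b (by omega) (by omega)
    rw [show n - 1 - 1 = n - 2 by omega, Nat.cast_sub (by omega)] at h2
    push_cast at h2
    linear_combination (n:ℝ) * h2 + ((n:ℝ) - 1 - b) * h1
  · have : b = n := by omega
    subst this
    rw [Nat.choose_eq_zero_of_lt (by omega)]
    simp

lemma batch_var {E : Type*} [NormedAddCommGroup E] [InnerProductSpace ℝ E]
    (n b : ℕ) (hn : 2 ≤ n) (hbn : b ≤ n) (x : Fin n → E) :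
    ((n:ℝ) * (n - 1)) * ∑ S : Batch n b, ‖∑ i ∈ S.1, x i‖ ^ 2
      = (n.choose b : ℝ) * (b * (b - 1) * ‖∑ i, x i‖ ^ 2 + b * (n - b) * ∑ i, ‖x i‖ ^ 2) := by
  rw [batch_sum (fun S => ‖∑ i ∈ S, x i‖ ^ 2)]
  have e1 : ∀ S : Finset (Fin n), ‖∑ i ∈ S, x i‖ ^ 2
      = ∑ i, ∑ j, (1 - (if Disjoint {i} S then (1:ℝ) else 0) - (if Disjoint {j} S then (1:ℝ) else 0)
        + (if Disjoint {i, j} S then (1:ℝ) else 0)) * ⟪x i, x j⟫ := by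
    intro S
    have : ∀ i j, (1 - (if Disjoint {i} S then (1:ℝ) else 0)
        - (if Disjoint {j} S then (1:ℝ) else 0)
        + (if Disjoint {i, j} S then (1:ℝ) else 0)) * ⟪x i, x j⟫
        = if i ∈ S then (if j ∈ S then ⟪x i, x j⟫ else 0) else 0 := by
      intro i j
      by_cases hi : i ∈ S <;> by_cases hj : j ∈ S <;> simp [hi, hj]
    simp only [this]
    rw [← real_inner_self_eq_norm_sq, sum_inner]
    simp only [inner_sum]
    have h2 : ∀ i, (∑ j, if i ∈ S then (if j ∈ S then ⟪x i, x j⟫ else 0) else 0)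
        = if i ∈ S then ∑ j ∈ S, ⟪x i, x j⟫ else 0 := by
      intro i
      split_ifs <;> simp
    simp only [h2]
    simp
  rw [Finset.sum_congr rfl fun S _ => e1 S]
  rw [Finset.sum_comm]
  have e2 : ∀ i j : Fin n, ((n:ℝ) * (n - 1)) * ∑ S ∈ powersetCard b (univ : Finset (Fin n)),
      (1 - (if Disjoint {i} S then (1:ℝ) else 0) - (if Disjoint {j} S then (1:ℝ) else 0)
        + (if Disjoint {i, j} S then (1:ℝ) else 0)) * ⟪x i, x j⟫
      = (n.choose b : ℝ) * (b * (b - 1) * ⟪x i, x j⟫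
        + if i = j then b * (n - b) * ⟪x i, x j⟫ else 0) := by
    intro i j
    rw [← Finset.sum_mul, Finset.sum_add_distrib, Finset.sum_sub_distrib, Finset.sum_sub_distrib,
      card_not_mem, card_not_mem, card_not_mem]
    have h1 := choose1 n b (by omega) hbn
    have h2 := choose2 n b hn hbn
    by_cases hij : i = j
    · subst hij
      simp only [Finset.pair_eq_singleton, card_singleton, if_true, sum_const, card_powersetCard,
        card_univ, Fintype.card_fin, nsmul_eq_mul, mul_one]
      linear_combination (-((n:ℝ) - 1) * ⟪x i, x i⟫) * h1
    · simp only [Finset.card_pair hij, card_singleton, if_neg hij, sum_const, card_powersetCard,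
        card_univ, Fintype.card_fin, nsmul_eq_mul, mul_one]
      linear_combination (-2 * ((n:ℝ) - 1) * ⟪x i, x j⟫) * h1 + ⟪x i, x j⟫ * h2
  have e3 : ((n:ℝ) * (n - 1)) * ∑ i : Fin n, ∑ S ∈ powersetCard b (univ : Finset (Fin n)), ∑ j : Fin n,
      (1 - (if Disjoint {i} S then (1:ℝ) else 0) - (if Disjoint {j} S then (1:ℝ) else 0)
        + (if Disjoint {i, j} S then (1:ℝ) else 0)) * ⟪x i, x j⟫
      = ∑ i : Fin n, ∑ j : Fin n, (n.choose b : ℝ) * (b * (b - 1) * ⟪x i, x j⟫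
        + if i = j then b * (n - b) * ⟪x i, x j⟫ else 0) := by
    rw [Finset.mul_sum]
    refine Finset.sum_congr rfl fun i _ => ?_
    rw [Finset.sum_comm, Finset.mul_sum]
    exact Finset.sum_congr rfl fun j _ => e2 i j
  rw [e3]
  simp only [← Finset.mul_sum, Finset.sum_add_distrib]
  congr 2
  · rw [← real_inner_self_eq_norm_sq, sum_inner]
    simp only [inner_sum]
  · simp [Finset.mul_sum]

lemma batch_mean (n b : ℕ) (hn : 2 ≤ n) (hbn : b ≤ n) (c : Fin n → ℝ) :
    (n:ℝ) * ∑ S : Batch n b, ∑ i ∈ S.1, c i = (n.choose b : ℝ) * (b * ∑ i, c i) := by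
  rw [batch_sum (fun S => ∑ i ∈ S, c i)]
  have e1 : ∀ S : Finset (Fin n), ∑ i ∈ S, c i
      = ∑ i, (1 - (if Disjoint {i} S then (1:ℝ) else 0)) * c i := by
    intro S
    have : ∀ i, (1 - (if Disjoint {i} S then (1:ℝ) else 0)) * c i = if i ∈ S then c i else 0 := by
      intro i
      by_cases hi : i ∈ S <;> simp [hi]
    simp only [this]
    simp
  rw [Finset.sum_congr rfl fun S _ => e1 S]
  rw [Finset.sum_comm]
  simp only [Finset.mul_sum]
  refine Finset.sum_congr rfl fun i _ => ?_
  rw [← Finset.mul_sum, ← Finset.sum_mul, Finset.sum_sub_distrib, card_not_mem]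
  have h1 := choose1 n b (by omega) hbn
  simp only [card_singleton, sum_const, card_powersetCard,
        card_univ, Fintype.card_fin, nsmul_eq_mul, mul_one]
  linear_combination (- c i) * h1

/-- second moment and mean of a mini-batch perturbation -/
lemma batch_expand {E : Type*} [NormedAddCommGroup E] [InnerProductSpace ℝ E]
    (n b : ℕ) (hn : 2 ≤ n) (hb : 0 < b) (hbn : b ≤ n) (x : Fin n → E) (A : E) (η z : ℝ)
    (hz : z = ((n : ℝ) - b) / (((n : ℝ) - 1) * b)) :
    (∑ S : Batch n b, ‖A - η • ((b:ℝ)⁻¹ • ∑ i ∈ S.1, x i)‖ ^ 2) / (n.choose b : ℝ)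
      = ‖A‖ ^ 2 - 2 * η * ⟪(n:ℝ)⁻¹ • ∑ i, x i, A⟫
        + η ^ 2 * ((1 - z) * ‖(n:ℝ)⁻¹ • ∑ i, x i‖ ^ 2 + z * ((n:ℝ)⁻¹ * ∑ i, ‖x i‖ ^ 2)) := by
  have hN : (0:ℝ) < n.choose b := by exact_mod_cast Nat.choose_pos hbn
  have hbR : (0:ℝ) < b := by exact_mod_cast hb
  have hnR : (2:ℝ) ≤ n := by exact_mod_cast hn
  have hv := batch_var n b hn hbn x
  have hm := batch_mean n b hn hbn (fun i => ⟪x i, A⟫)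
  have e : ∀ S : Batch n b, ‖A - η • ((b:ℝ)⁻¹ • ∑ i ∈ S.1, x i)‖ ^ 2
      = ‖A‖ ^ 2 - 2 * η * (b:ℝ)⁻¹ * (∑ i ∈ S.1, ⟪x i, A⟫)
        + η ^ 2 * (b:ℝ)⁻¹ ^ 2 * ‖∑ i ∈ S.1, x i‖ ^ 2 := by
    intro S
    rw [norm_sub_sq_real, real_inner_smul_right, real_inner_smul_right, real_inner_comm,
      sum_inner, norm_smul, norm_smul, mul_pow, mul_pow, Real.norm_eq_abs, Real.norm_eq_abs,
      sq_abs, sq_abs]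
    ring
  simp only [e]
  rw [Finset.sum_add_distrib, Finset.sum_sub_distrib, ← Finset.mul_sum, ← Finset.mul_sum,
    real_inner_smul_left, sum_inner, norm_smul, mul_pow, Real.norm_eq_abs, sq_abs]
  have hcard : Fintype.card (Batch n b) = n.choose b := by
    have := batch_sum (n := n) (b := b) (fun _ => (1:ℕ))
    simpa [Finset.card_powersetCard] using this
  rw [Finset.sum_const, Finset.card_univ, hcard, nsmul_eq_mul]
  generalize (∑ S : Batch n b, ∑ i ∈ S.1, ⟪x i, A⟫) = P at *
  generalize (∑ S : Batch n b, ‖∑ i ∈ S.1, x i‖ ^ 2) = Q at *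
  have hn1 : (n:ℝ) - 1 ≠ 0 := by linarith
  have hn0 : (n:ℝ) ≠ 0 := by linarith
  have hP : P = (n.choose b : ℝ) * (b * ∑ i, ⟪x i, A⟫) / n := by
    field_simp; linarith
  have hQ : Q = (n.choose b : ℝ) * (b * (b - 1) * ‖∑ i, x i‖ ^ 2 + b * (n - b) * ∑ i, ‖x i‖ ^ 2)
      / ((n:ℝ) * (n - 1)) := by
    field_simp; linarith
  rw [hP, hQ, hz]
  field_simp
  ring

/-- descent consequence of smoothness -/
lemma grad_sq_le {E : Type*} [NormedAddCommGroup E] [InnerProductSpace ℝ E] (L : ℝ) (hL : 0 < L)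
    (h : E → ℝ) (w G : E) (m : ℝ) (hm : ∀ v, m ≤ h v)
    (hs : ∀ v, h v ≤ h w + ⟪G, v - w⟫ + L / 2 * ‖v - w‖ ^ 2) :
    ‖G‖ ^ 2 ≤ 2 * L * (h w - m) := by
  have h1 := hs (w - L⁻¹ • G)
  have h2 := hm (w - L⁻¹ • G)
  rw [show w - L⁻¹ • G - w = -(L⁻¹ • G) by abel, norm_neg, inner_neg_right,
    real_inner_smul_right, real_inner_self_eq_norm_sq, norm_smul, mul_pow, Real.norm_eq_abs,
    sq_abs] at h1
  have h3 : m ≤ h w - ‖G‖ ^ 2 / (2 * L) := by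
    calc m ≤ _ := h2.trans h1
      _ = _ := by field_simp; ring
  have h4 : ‖G‖ ^ 2 / (2 * L) ≤ h w - m := by linarith
  rw [div_le_iff₀ (by positivity)] at h4
  linarith

/-- deterministic part of the recurrence -/
lemma lyap_step {E : Type*} [NormedAddCommGroup E] [InnerProductSpace ℝ E]
    (L μ η η' l l' : ℝ) (hη : 0 < η) (hl : 0 ≤ l) (hμ : 0 < μ) (hr : η * μ ≤ 1)
    (hll : η' * l' ≤ η * (1 + l * (1 - η * μ)) - L * η ^ 2)
    (a v G : E) (Dx Dy M c : ℝ) (hDx : 0 ≤ Dx)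
    (ha : Dx + μ / 2 * ‖a‖ ^ 2 ≤ ⟪G, a⟫)
    (hv : Dx - Dy + μ / 2 * ‖v‖ ^ 2 ≤ ⟪G, v⟫)
    (hM : M ≤ 2 * L * Dx + c) :
    ‖a + (l * (1 - η * μ)) • v‖ ^ 2 - 2 * η * ⟪G, a + (l * (1 - η * μ)) • v⟫ + η ^ 2 * M
      + 2 * η' * l' * Dx ≤
    (1 - η * μ) * (‖a + l • v‖ ^ 2 + 2 * η * l * Dy) + η ^ 2 * c := by
  rw [norm_add_sq_real, norm_add_sq_real, inner_add_right, real_inner_smul_right,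
    real_inner_smul_right, real_inner_smul_right, norm_smul, norm_smul, mul_pow, mul_pow,
    Real.norm_eq_abs, Real.norm_eq_abs, sq_abs, sq_abs]
  set r := 1 - η * μ with hr'
  have hr0 : 0 ≤ r := by linarith
  have hr1 : r ≤ 1 := by nlinarith [mul_pos hη hμ]
  have p1 := mul_le_mul_of_nonneg_left ha (show 0 ≤ 2 * η by linarith)
  have p2 := mul_le_mul_of_nonneg_left hv (show 0 ≤ 2 * η * (l * r) by positivity)
  have p3 := mul_le_mul_of_nonneg_left hM (show 0 ≤ η ^ 2 by positivity)
  have p4 := mul_le_mul_of_nonneg_right hll (show 0 ≤ 2 * Dx by linarith)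
  have p5 : 0 ≤ l ^ 2 * (r * (1 - r)) * ‖v‖ ^ 2 := by
    have : 0 ≤ 1 - r := by linarith
    positivity
  have p6 : 0 ≤ η * (l * r) * μ * ‖v‖ ^ 2 := by positivity
  have p7 : η * μ * ‖a‖ ^ 2 = (1 - r) * ‖a‖ ^ 2 := by rw [hr']; ring
  nlinarith [p1, p2, p3, p4, p5, p6, p7]

lemma lam_ineq (L μ η0 η η' : ℝ) (k : ℕ) (hL : 0 < L) (hμ : 0 < μ) (hη' : 0 < η') (h1 : η' ≤ η)
    (h0 : η ≤ η0) (hub : 2 * η0 * L ≤ 1) (hr : η * μ ≤ 1) :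
    η' * ((1 - 2 * η0 * L) / (η' * μ) * (1 - (1 - η' * μ) ^ (k + 1)))
      ≤ η * (1 + ((1 - 2 * η0 * L) / (η * μ) * (1 - (1 - η * μ) ^ k)) * (1 - η * μ))
        - L * η ^ 2 := by
  have hη : 0 < η := by linarith
  have e1 : η' * ((1 - 2 * η0 * L) / (η' * μ) * (1 - (1 - η' * μ) ^ (k + 1)))
      = (1 - 2 * η0 * L) / μ * (1 - (1 - η' * μ) ^ (k + 1)) := by field_simp
  have e2 : η * (1 + ((1 - 2 * η0 * L) / (η * μ) * (1 - (1 - η * μ) ^ k)) * (1 - η * μ))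
      = η * (2 * η0 * L) + (1 - 2 * η0 * L) / μ * (1 - (1 - η * μ) ^ (k + 1)) := by
    field_simp; ring
  have hp : (1 - η * μ) ^ (k+1) ≤ (1 - η' * μ) ^ (k+1) :=
    pow_le_pow_left₀ (by linarith) (by nlinarith) _
  have hc : 0 ≤ (1 - 2 * η0 * L) / μ := div_nonneg (by linarith) hμ.le
  rw [e1, e2]
  have := mul_le_mul_of_nonneg_left (show 1 - (1 - η' * μ) ^ (k+1) ≤ 1 - (1 - η * μ) ^ (k+1) by linarith) hc
  have h3 : L * η * η ≤ L * η * η0 := mul_le_mul_of_nonneg_left h0 (by positivity)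
  have h4 : 0 ≤ L * η * η0 := by have : 0 < η0 := by linarith
                                 positivity
  nlinarith

/-- **Theorem (one-step recurrence for SHB)**: for smooth, strongly convex finite-sum
minimization, the Lyapunov quantity `E_k` of SHB with the averaging parameterization
satisfies `E[E_{k+1}] ≤ (1 − η_k μ) E[E_k] + 2Lκζ²η_k²σ²`. -/
theorem shb_one_step_recurrence
    (d n b : ℕ) (hd : 0 < d) (hn : 2 ≤ n) (hb : 0 < b) (hbn : b ≤ n)
    (L μ : ℝ) (hL : 0 < L) (hμpos : 0 < μ) (hμL : μ ≤ L)
    (f : Fin n → Vec d → ℝ) (g : Fin n → Vec d → Vec d)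
    -- each `f i` is differentiable with gradient `g i`
    (hdiff : ∀ i w, HasGradientAt (f i) (g i w) w)
    -- each `f i` is convex
    (hconv : ∀ i, ConvexOn ℝ Set.univ (f i))
    -- each `f i` is `L`-smooth
    (hsmooth : ∀ i v w, f i v ≤ f i w + ⟪g i w, v - w⟫ + L / 2 * ‖v - w‖ ^ 2)
    -- each `f i` has a finite infimum `fstar i`
    (fstar : Fin n → ℝ) (hfstar : ∀ i, IsGLB (Set.range (f i)) (fstar i))
    (F : Vec d → ℝ) (hF : F = fun w => (n : ℝ)⁻¹ * ∑ i, f i w)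
    (gF : Vec d → Vec d) (hgF : gF = fun w => (n : ℝ)⁻¹ • ∑ i, g i w)
    -- `F` is `μ`-strongly convex
    (hsc : ∀ v w, F w + ⟪gF w, v - w⟫ + μ / 2 * ‖v - w‖ ^ 2 ≤ F v)
    -- `wstar` minimizes `F`
    (wstar : Vec d) (hmin : ∀ w, F wstar ≤ F w)
    (w0 : Vec d)
    -- step-size sequence: non-increasing, positive, below `1/(2L)`
    (η : ℕ → ℝ) (hη_anti : ∀ k, η (k + 1) ≤ η k)
    (hη_pos : ∀ k, 0 < η k) (hη_ub : ∀ k, η k < 1 / (2 * L))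
    (lam α β : ℕ → ℝ)
    (hlam : ∀ k, lam k = (1 - 2 * η 0 * L) / (η k * μ) * (1 - (1 - η k * μ) ^ k))
    (hα : ∀ k, α k = η k / (1 + lam (k + 1)))
    (hβ : ∀ k, β k = lam k * (1 - η k * μ) / (1 + lam (k + 1)))
    -- the SHB update (state = `(w_k, w_{k−1})`)
    (step : ℕ → Vec d × Vec d → Batch n b → Vec d × Vec d)
    (hstep : ∀ k s S, step k s S =
      (s.1 - α k • ((b : ℝ)⁻¹ • ∑ i ∈ S.1, g i s.1) + β k • (s.1 - s.2), s.1))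
    -- the Lyapunov function `E_k = A_k + 2 η_k λ_k (f(w_{k−1}) − f(w*))`
    (Ecal : ℕ → Vec d × Vec d → ℝ)
    (hEcal : ∀ k s, Ecal k s =
      ‖s.1 - wstar + lam k • (s.1 - s.2)‖ ^ 2 + 2 * η k * lam k * (F s.2 - F wstar))
    (κ ζ σ2 : ℝ) (hκ : κ = L / μ)
    (hζ : ζ = Real.sqrt (((n : ℝ) - b) / (((n : ℝ) - 1) * b)))
    (hσ2 : σ2 = (n : ℝ)⁻¹ * ∑ i, (f i wstar - fstar i)) :
    ∀ k : ℕ,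
      expVal (k + 1) (fun bs => Ecal (k + 1) (procRun step (w0, w0) (k + 1) bs))
        ≤ (1 - η k * μ) * expVal k (fun bs => Ecal k (procRun step (w0, w0) k bs))
          + 2 * L * κ * ζ ^ 2 * η k ^ 2 * σ2 := by
  intro k
  have hnR : (2:ℝ) ≤ n := by exact_mod_cast hn
  have hbR : (1:ℝ) ≤ b := by exact_mod_cast hb
  have hbnR : (b:ℝ) ≤ n := by exact_mod_cast hbn
  have hcard : Fintype.card (Batch n b) = n.choose b := by
    have := batch_sum (n := n) (b := b) (fun _ => (1:ℕ))
    simpa [Finset.card_powersetCard] using this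
  have hNpos : 0 < n.choose b := Nat.choose_pos hbn
  have hNR : (0:ℝ) < n.choose b := by exact_mod_cast hNpos
  haveI : Nonempty (Batch n b) := by
    rw [← Fintype.card_pos_iff, hcard]; exact hNpos
  -- the sampling constant
  obtain ⟨z, hz⟩ : ∃ z : ℝ, z = ((n : ℝ) - b) / (((n : ℝ) - 1) * b) := ⟨_, rfl⟩
  have hz0 : 0 ≤ z := by
    rw [hz]; apply div_nonneg (by linarith); apply mul_nonneg <;> linarith
  have hz1 : z ≤ 1 := by
    rw [hz, div_le_one (by apply mul_pos <;> linarith)]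
    nlinarith
  have hζ2 : ζ ^ 2 = z := by rw [hζ, ← hz, Real.sq_sqrt hz0]
  -- step sizes
  have hub : ∀ j, 2 * η j * L ≤ 1 := by
    intro j
    have := hη_ub j
    rw [lt_div_iff₀ (by positivity)] at this
    linarith
  have hanti : Antitone η := antitone_nat_of_succ_le hη_anti
  have hημ : ∀ j, η j * μ ≤ 1 := by
    intro j
    have := hub j
    nlinarith [hη_pos j, mul_le_mul_of_nonneg_left hμL (hη_pos j).le]
  have hlam0 : ∀ j, 0 ≤ lam j := by
    intro j
    rw [hlam]
    have h1 := hub 0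
    have h2 := hημ j
    have h3 := mul_pos (hη_pos j) hμpos
    have h4 : (1 - η j * μ) ^ j ≤ 1 := pow_le_one₀ (by linarith) (by linarith)
    exact mul_nonneg (div_nonneg (by linarith) h3.le) (by linarith)
  have hll := lam_ineq L μ (η 0) (η k) (η (k+1)) k hL hμpos (hη_pos _) (hη_anti k)
    (hanti (Nat.zero_le k)) (hub 0) (hημ k)
  rw [← hlam, ← hlam] at hll
  -- noise is nonnegative
  have hfs : ∀ i w, fstar i ≤ f i w := fun i w => (hfstar i).1 ⟨w, rfl⟩
  have hn0 : (0:ℝ) ≤ (n:ℝ)⁻¹ := by positivity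
  have hσ0 : 0 ≤ σ2 := by
    rw [hσ2]
    exact mul_nonneg hn0 (Finset.sum_nonneg fun i _ => by linarith [hfs i wstar])
  have hκ1 : 1 ≤ κ := by rw [hκ, le_div_iff₀ hμpos]; linarith
  -- smoothness of F
  have hFs : ∀ v w, F v ≤ F w + ⟪gF w, v - w⟫ + L / 2 * ‖v - w‖ ^ 2 := by
    intro v w
    have h1 := Finset.sum_le_sum fun i (_ : i ∈ univ) => hsmooth i v w
    rw [Finset.sum_add_distrib, Finset.sum_add_distrib, Finset.sum_const, Finset.card_univ,
      Fintype.card_fin, nsmul_eq_mul, ← sum_inner] at h1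
    have h2 := mul_le_mul_of_nonneg_left h1 hn0
    rw [hF, hgF]
    simp only [real_inner_smul_left]
    calc _ ≤ _ := h2
      _ = _ := by field_simp
  have hgF2 : ∀ w, ‖gF w‖ ^ 2 ≤ 2 * L * (F w - F wstar) := fun w =>
    grad_sq_le L hL F w (gF w) (F wstar) hmin (fun v => hFs v w)
  have hgi2 : ∀ w, (n:ℝ)⁻¹ * ∑ i, ‖g i w‖ ^ 2 ≤ 2 * L * (F w - F wstar) + 2 * L * σ2 := by
    intro w
    have h1 := Finset.sum_le_sum fun i (_ : i ∈ univ) =>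
      grad_sq_le L hL (f i) w (g i w) (fstar i) (hfs i) (fun v => hsmooth i v w)
    have h2 := mul_le_mul_of_nonneg_left h1 hn0
    refine h2.trans (le_of_eq ?_)
    rw [hF, hσ2, ← Finset.mul_sum, Finset.sum_sub_distrib, Finset.sum_sub_distrib]
    ring
  rw [expVal_succ]
  apply expVal_le
  intro bs
  have hrun : ∀ c : Batch n b, procRun step (w0, w0) (k+1)
      (Fin.snoc (α := fun _ => Batch n b) bs c) = step k (procRun step (w0, w0) k bs) c := by
    intro c
    simp [procRun]
  simp only [hrun]
  generalize procRun step (w0, w0) k bs = s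
  obtain ⟨x, y⟩ := s
  have hE : ∀ c : Batch n b, Ecal (k+1) (step k (x, y) c)
      = ‖((x - wstar) + (lam k * (1 - η k * μ)) • (x - y))
          - η k • ((b:ℝ)⁻¹ • ∑ i ∈ c.1, g i x)‖ ^ 2
        + 2 * η (k+1) * lam (k+1) * (F x - F wstar) := by
    intro c
    rw [hEcal, hstep]
    simp only
    congr 3
    generalize ((b:ℝ)⁻¹ • ∑ i ∈ c.1, g i x) = G
    have hp : 1 + lam (k+1) ≠ 0 := by linarith [hlam0 (k+1)]
    have ea : η k = (1 + lam (k+1)) * α k := by rw [hα]; field_simp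
    have eb : lam k * (1 - η k * μ) = (1 + lam (k+1)) * β k := by rw [hβ]; field_simp
    rw [eb, ea]
    module
  simp only [hE]
  rw [Finset.sum_add_distrib, Finset.sum_const, Finset.card_univ, hcard, nsmul_eq_mul, add_div,
    mul_div_cancel_left₀ _ hNR.ne',
    batch_expand n b hn hb hbn (fun i => g i x) _ (η k) z hz, hEcal]
  have hgx : (n:ℝ)⁻¹ • ∑ i, g i x = gF x := by rw [hgF]
  rw [hgx]
  have ha := hsc wstar x
  have hv := hsc y x
  rw [← neg_sub x wstar, inner_neg_right, norm_neg] at ha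
  rw [← neg_sub x y, inner_neg_right, norm_neg] at hv
  have hM : (1 - z) * ‖gF x‖ ^ 2 + z * ((n:ℝ)⁻¹ * ∑ i, ‖g i x‖ ^ 2)
      ≤ 2 * L * (F x - F wstar) + 2 * L * z * σ2 := by
    have h1 := mul_le_mul_of_nonneg_left (hgF2 x) (show 0 ≤ 1 - z by linarith)
    have h2 := mul_le_mul_of_nonneg_left (hgi2 x) hz0
    linarith
  have key := lyap_step L μ (η k) (η (k+1)) (lam k) (lam (k+1)) (hη_pos k) (hlam0 k) hμpos (hημ k)
    hll (x - wstar) (x - y) (gF x) (F x - F wstar) (F y - F wstar) _ _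
    (by linarith [hmin x]) (by linarith) (by linarith) hM
  refine key.trans ?_
  simp only
  have hfin : η k ^ 2 * (2 * L * z * σ2) ≤ 2 * L * κ * ζ ^ 2 * η k ^ 2 * σ2 := by
    rw [hζ2]
    have h5 : 0 ≤ η k ^ 2 * (2 * L * z * σ2) := by positivity
    calc η k ^ 2 * (2 * L * z * σ2) ≤ κ * (η k ^ 2 * (2 * L * z * σ2)) := by
          exact le_mul_of_one_le_left h5 hκ1
      _ = _ := by ring
  linarith
end
end

section
/- (Lemma: lower bound on the averaging coefficient product.) Let L ≥ μ > 0, T ≥ 1, γ = (1/T)^{1/T}, η_k = γ^{k+1}/(2L) for k ≥ 0, and λ_T = ((1 − 2η_0 L)/(η_T μ))·(1 − (1 − η_T μ)^T). Then λ_T · η_T ≥ ((1 − γ)/μ) · (1 − exp(−μγ/(2L))). -/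
noncomputable section

/-- **Lemma**: lower bound on the product `λ_T · η_T` of the averaging coefficients of
SHB with exponentially decreasing step sizes `η_k = γ^{k+1}/(2L)`, `γ = (1/T)^{1/T}`. -/
theorem lambda_eta_product_lower_bound
    (L μ : ℝ) (hμ : 0 < μ) (hμL : μ ≤ L)
    (T : ℕ) (hT : 1 ≤ T)
    (γ : ℝ) (hγ : γ = ((T : ℝ)⁻¹) ^ ((T : ℝ)⁻¹))
    (η : ℕ → ℝ) (hη : ∀ k, η k = γ ^ (k + 1) / (2 * L))
    (lamT : ℝ)
    (hlamT : lamT = (1 - 2 * η 0 * L) / (η T * μ) * (1 - (1 - η T * μ) ^ T)) :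
    (1 - γ) / μ * (1 - Real.exp (-(μ * γ) / (2 * L))) ≤ lamT * η T := by
  have hL : 0 < L := lt_of_lt_of_le hμ hμL
  have hT0 : (0 : ℝ) < T := by exact_mod_cast hT
  have hT1 : (1 : ℝ) ≤ T := by exact_mod_cast hT
  have hγ0 : 0 < γ := by rw [hγ]; positivity
  have hγ1 : γ ≤ 1 := by
    rw [hγ]
    exact Real.rpow_le_one (by positivity) (inv_le_one_of_one_le₀ hT1) (by positivity)
  have hpow : γ ^ T = (T : ℝ)⁻¹ := by
    rw [hγ]
    exact Real.rpow_inv_natCast_pow (by positivity) (by omega)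
  have hηT : η T = γ / (2 * L * T) := by
    rw [hη, pow_succ, hpow]; field_simp
  have hη0 : 1 - 2 * η 0 * L = 1 - γ := by
    rw [hη]; field_simp; ring
  have hηpos : 0 < η T := by rw [hηT]; positivity
  have hx : η T * μ ≤ 1 := by
    rw [hηT, div_mul_eq_mul_div, div_le_one (by positivity)]
    nlinarith [mul_le_mul hγ1 hμL hμ.le zero_le_one, mul_le_mul_of_nonneg_left hT1 hL.le]
  have hexp : (1 - η T * μ) ^ T ≤ Real.exp (-(μ * γ) / (2 * L)) := by
    calc (1 - η T * μ) ^ T ≤ (Real.exp (-(η T * μ))) ^ T :=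
          pow_le_pow_left₀ (by linarith) (Real.one_sub_le_exp_neg _) _
      _ = Real.exp (-(μ * γ) / (2 * L)) := by
          rw [← Real.exp_nat_mul, hηT]
          congr 1
          field_simp
  have hl : lamT * η T = (1 - γ) / μ * (1 - (1 - η T * μ) ^ T) := by
    rw [hlamT, hη0]
    generalize (1 - η T * μ) ^ T = z
    field_simp
  rw [hl]
  exact mul_le_mul_of_nonneg_left (by linarith) (div_nonneg (by linarith) hμ.le)
end
end

section
/- (Lemma: bound on the heavy-ball contraction constant.) Let κ ≥ 1, 0 < a ≤ 1, and set β = (1 − √a/(2√κ))². Define h(β, z) := −(β − (1 − √z)²)(β − (1 + √z)²). Then √2 (β + 1)/sqrt( min{ h(β, a/κ), h(β, a) } ) ≤ 3 sqrt(κ/a). -/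
noncomputable section

lemma key_bound (t s : ℝ) (ht0 : 0 < t) (hts : t ≤ s) (hs : s ≤ 1) :
    2 * ((1 - t / 2) ^ 2 + 1) ^ 2 * t ^ 2 ≤
      9 * (-(((1 - t / 2) ^ 2 - (1 - s) ^ 2) * ((1 - t / 2) ^ 2 - (1 + s) ^ 2))) := by
  have e : -(((1 - t / 2) ^ 2 - (1 - s) ^ 2) * ((1 - t / 2) ^ 2 - (1 + s) ^ 2))
      = (s ^ 2 - t ^ 2 / 4) * ((2 - t / 2) ^ 2 - s ^ 2) := by ring
  rw [e]
  have h1 : 3 / 4 * t ^ 2 ≤ s ^ 2 - t ^ 2 / 4 := by nlinarith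
  have h2 : (2 - t / 2) ^ 2 - 1 ≤ (2 - t / 2) ^ 2 - s ^ 2 := by nlinarith
  have h3 : 0 ≤ (2 - t / 2) ^ 2 - 1 := by nlinarith
  have h4 : 3 / 4 * t ^ 2 * ((2 - t / 2) ^ 2 - 1)
      ≤ (s ^ 2 - t ^ 2 / 4) * ((2 - t / 2) ^ 2 - s ^ 2) :=
    mul_le_mul h1 h2 h3 (le_trans (by positivity) h1)
  have h5 : 2 * ((1 - t / 2) ^ 2 + 1) ^ 2 ≤ 27 / 4 * ((2 - t / 2) ^ 2 - 1) := by
    have hu : (1 - t / 2) ^ 2 ≤ 1 := by nlinarith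
    have : ((1 - t / 2) ^ 2 + 1) ^ 2 ≤ 2 * ((1 - t / 2) ^ 2 + 1) := by
      nlinarith [sq_nonneg (1 - t / 2)]
    nlinarith
  nlinarith [mul_le_mul_of_nonneg_right h5 (sq_nonneg t)]

/-- **Lemma**: bound on the heavy-ball contraction constant
`C₀ = √2(β+1)/√(min{h(β, αμ), h(β, αL)}) ≤ 3 √(κ/a)` for `α = a/L`,
`β = (1 − √a/(2√κ))²`, so that `αμ = a/κ` and `αL = a`. -/
theorem heavy_ball_contraction_constant_bound
    (κ a : ℝ) (hκ : 1 ≤ κ) (ha0 : 0 < a) (ha1 : a ≤ 1)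
    (β : ℝ) (hβ : β = (1 - Real.sqrt a / (2 * Real.sqrt κ)) ^ 2)
    (h : ℝ → ℝ → ℝ)
    (hh : ∀ b z, h b z = -((b - (1 - Real.sqrt z) ^ 2) * (b - (1 + Real.sqrt z) ^ 2))) :
    Real.sqrt 2 * (β + 1) / Real.sqrt (min (h β (a / κ)) (h β a))
      ≤ 3 * Real.sqrt (κ / a) := by
  have hκ0 : 0 < κ := by linarith
  obtain ⟨t, ht⟩ : ∃ t, t = Real.sqrt (a / κ) := ⟨_, rfl⟩
  have ht0 : 0 < t := by rw [ht]; positivity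
  have hts : t ≤ Real.sqrt a := by
    rw [ht]; exact Real.sqrt_le_sqrt (div_le_self ha0.le hκ)
  have hs : Real.sqrt a ≤ 1 := Real.sqrt_le_one.mpr ha1
  have hb : β = (1 - t / 2) ^ 2 := by
    rw [hβ, ht, Real.sqrt_div ha0.le]
    congr 2
    rw [div_div, mul_comm]
  have hinv : Real.sqrt (κ / a) = 1 / t := by
    rw [ht, one_div, ← Real.sqrt_inv, inv_div]
  have k1 := key_bound t t ht0 le_rfl (hts.trans hs)
  have k2 := key_bound t (Real.sqrt a) ht0 hts hs
  have hm : 2 * (β + 1) ^ 2 * t ^ 2 ≤ 9 * min (h β (a / κ)) (h β a) := by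
    rw [hh, hh, ← ht, hb]
    rcases min_choice (-(((1 - t / 2) ^ 2 - (1 - t) ^ 2) * ((1 - t / 2) ^ 2 - (1 + t) ^ 2)))
      (-(((1 - t / 2) ^ 2 - (1 - Real.sqrt a) ^ 2) * ((1 - t / 2) ^ 2 - (1 + Real.sqrt a) ^ 2)))
      with h' | h' <;> rw [h'] <;> assumption
  have hb0 : 0 ≤ β := by rw [hb]; positivity
  generalize min (h β (a / κ)) (h β a) = m at hm
  have hm0 : 0 < m := by
    have : 0 < 2 * (β + 1) ^ 2 * t ^ 2 := by positivity
    linarith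
  have hsm : 0 < Real.sqrt m := Real.sqrt_pos.mpr hm0
  rw [hinv, mul_one_div, div_le_div_iff₀ hsm ht0]
  refine (sq_le_sq₀ (by positivity) (by positivity)).mp ?_
  rw [mul_pow, mul_pow, mul_pow, Real.sq_sqrt (by norm_num), Real.sq_sqrt hm0.le]
  linarith
end
end

section
/- (Intermediate claims in the contraction-constant bound.) Let κ ≥ 1, 0 < a ≤ 1, β = (1 − √a/(2√κ))², and h(β, z) := −(β − (1 − √z)²)(β − (1 + √z)²). Then h(β, a/κ) ≥ (15/16)·(a/κ) and h(β, a) ≥ (15/16)·a. -/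
noncomputable section

lemma hb_aux (t z : ℝ) (ht : 0 ≤ t) (htz : t ≤ z) (hz : z ≤ 1) :
    15 / 16 * z ^ 2 ≤
      -(((1 - t / 2) ^ 2 - (1 - z) ^ 2) * ((1 - t / 2) ^ 2 - (1 + z) ^ 2)) := by
  have h1 : 3 / 4 * z ^ 2 ≤ z ^ 2 - t ^ 2 / 4 := by nlinarith
  have h2 : 5 / 4 ≤ (2 - t / 2) ^ 2 - z ^ 2 := by nlinarith
  have h3 : 3 / 4 * z ^ 2 * (5 / 4) ≤ (z ^ 2 - t ^ 2 / 4) * ((2 - t / 2) ^ 2 - z ^ 2) :=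
    mul_le_mul h1 h2 (by norm_num) (le_trans (by positivity) h1)
  linarith

/-- **Lemma**: intermediate claims in the contraction-constant bound:
`h(β, a/κ) ≥ (15/16)(a/κ)` and `h(β, a) ≥ (15/16) a` for `β = (1 − √a/(2√κ))²`. -/
theorem heavy_ball_h_lower_bounds
    (κ a : ℝ) (hκ : 1 ≤ κ) (ha0 : 0 < a) (ha1 : a ≤ 1)
    (β : ℝ) (hβ : β = (1 - Real.sqrt a / (2 * Real.sqrt κ)) ^ 2)
    (h : ℝ → ℝ → ℝ)
    (hh : ∀ b z, h b z = -((b - (1 - Real.sqrt z) ^ 2) * (b - (1 + Real.sqrt z) ^ 2))) :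
    15 / 16 * (a / κ) ≤ h β (a / κ) ∧ 15 / 16 * a ≤ h β a := by
  have hd : Real.sqrt a / (2 * Real.sqrt κ) = Real.sqrt (a / κ) / 2 := by
    rw [Real.sqrt_div ha0.le, div_div, mul_comm]
  have hk : a / κ ≤ a := div_le_self ha0.le hκ
  have hp : 0 ≤ a / κ := by positivity
  have hle : Real.sqrt (a / κ) ≤ Real.sqrt a := Real.sqrt_le_sqrt hk
  have hs : Real.sqrt a ≤ 1 := Real.sqrt_le_one.mpr ha1
  have e1 := hb_aux _ _ (Real.sqrt_nonneg (a / κ)) le_rfl (hle.trans hs)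
  have e2 := hb_aux _ _ (Real.sqrt_nonneg (a / κ)) hle hs
  rw [Real.sq_sqrt hp] at e1
  rw [Real.sq_sqrt ha0.le] at e2
  rw [hh, hh, hβ, hd]
  exact ⟨e1, e2⟩
end
end

section
/- (Intermediate deterministic claim in the one-step SHB recurrence.) Let L ≥ μ > 0 and let (η_k)_{k≥0} be a non-increasing sequence with η_0 = η and 0 < η_k < 1/(2L) for all k. Define λ_k := ((1 − 2ηL)/(η_k μ))·(1 − (1 − η_k μ)^k). Then for every k ≥ 0, η_{k+1} λ_{k+1} ≤ η_k ( 1 − 2Lη_k + λ_k (1 − η_k μ) ); equivalently, 2Lη_k² − η_k λ_k (1 − η_k μ) − η_k + η_{k+1} λ_{k+1} ≤ 0. -/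
noncomputable section

/-- **Lemma**: deterministic inequality for the momentum-averaging sequence `λ_k` of SHB:
`η_{k+1} λ_{k+1} ≤ η_k (1 − 2Lη_k + λ_k(1 − η_k μ))`. -/
theorem lambda_sequence_inequality
    (L μ : ℝ) (hμ : 0 < μ) (hμL : μ ≤ L)
    (η : ℕ → ℝ) (hanti : ∀ k, η (k + 1) ≤ η k)
    (hpos : ∀ k, 0 < η k) (hub : ∀ k, η k < 1 / (2 * L))
    (lam : ℕ → ℝ)
    (hlam : ∀ k, lam k = (1 - 2 * η 0 * L) / (η k * μ) * (1 - (1 - η k * μ) ^ k)) :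
    ∀ k : ℕ, η (k + 1) * lam (k + 1) ≤ η k * (1 - 2 * L * η k + lam k * (1 - η k * μ)) := by
  intro k
  have hL : 0 < L := lt_of_lt_of_le hμ hμL
  have hbd : ∀ j, η j * (2 * L) < 1 := fun j => (lt_div_iff₀ (by positivity)).1 (hub j)
  have hmono : Antitone η := antitone_nat_of_succ_le hanti
  have h0 : η k ≤ η 0 := hmono (Nat.zero_le k)
  have key : ∀ j, η j * lam j = (1 - 2 * η 0 * L) / μ * (1 - (1 - η j * μ) ^ j) := by
    intro j
    have := (hpos j).ne'
    rw [hlam j]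
    field_simp
  have hC : 0 ≤ 1 - 2 * η 0 * L := by linarith [hbd 0]
  have hq : 0 ≤ 1 - η k * μ := by nlinarith [hbd k, hpos k]
  have hqq : (1 - η k * μ) ^ (k + 1) ≤ (1 - η (k + 1) * μ) ^ (k + 1) := by
    apply pow_le_pow_left₀ hq
    nlinarith [hanti k]
  have e : η k * (1 - 2 * L * η k + lam k * (1 - η k * μ))
      = η k * (1 - 2 * L * η k) + η k * lam k * (1 - η k * μ) := by ring
  rw [e, key (k + 1), key k]
  have h1 : η k * (1 - 2 * η 0 * L) ≤ η k * (1 - 2 * L * η k) := by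
    apply mul_le_mul_of_nonneg_left _ (hpos k).le
    nlinarith
  have h2 := mul_le_mul_of_nonneg_left hqq (div_nonneg hC hμ.le)
  have h3 : (1 - 2 * η 0 * L) / μ * (1 - (1 - η k * μ) ^ (k + 1))
      = η k * (1 - 2 * η 0 * L)
        + (1 - 2 * η 0 * L) / μ * (1 - (1 - η k * μ) ^ k) * (1 - η k * μ) := by
    field_simp
    ring
  linarith
end
end
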